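/- arXiv:2407.13401 — 5 statements merged into one kernel-verified Lean document; each statement's English description precedes it below -/
import Mathlib

section
/- Let G ∈ ℂ^{n×n} be Hermitian positive semidefinite, d, g ∈ ℂ^n, γ̃ ∈ ℝ, and define the constraint function q(u) = (uᴴ G u).re − 2·Re(gᴴ u). Suppose ε ≥ 0 is a real number, u* = (I + ε·G)⁻¹(d + ε·g), q(u*) ≤ γ̃, and the complementary slackness condition ε·(q(u*) − γ̃) = 0 holds. Then for every u ∈ ℂ^n with q(u) ≤ γ̃ one has ‖u* − d‖² ≤ ‖u − d‖². -/
open Matrix ComplexOrder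

/-- Squared Hermitian norm of a complex vector. -/
noncomputable def vnormSq {n : ℕ} (u : Fin n → ℂ) : ℝ := ∑ i, ‖u i‖ ^ 2

theorem vnormSq_eq_re_dotProduct {n : ℕ} (u : Fin n → ℂ) :
    vnormSq u = (star u ⬝ᵥ u).re := by
  simp [vnormSq, dotProduct, ← Complex.normSq_eq_norm_sq, Complex.normSq_apply]

theorem re_star_dotProduct_comm {n : ℕ} (u v : Fin n → ℂ) :
    (star u ⬝ᵥ v).re = (star v ⬝ᵥ u).re := by
  rw [← Complex.conj_re, starRingEnd_apply, star_dotProduct, star_star, dotProduct_comm]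

theorem vnormSq_add {n : ℕ} (u v : Fin n → ℂ) :
    vnormSq (u + v) = vnormSq u + vnormSq v + 2 * (star v ⬝ᵥ u).re := by
  simp only [vnormSq_eq_re_dotProduct, star_add, add_dotProduct, dotProduct_add, Complex.add_re]
  rw [re_star_dotProduct_comm u v]
  ring

theorem Matrix.IsHermitian.re_quadForm_add {n : ℕ} {G : Matrix (Fin n) (Fin n) ℂ}
    (hG : G.IsHermitian) (u v : Fin n → ℂ) :
    (star (u + v) ⬝ᵥ (G *ᵥ (u + v))).re =
      (star u ⬝ᵥ (G *ᵥ u)).re + (star v ⬝ᵥ (G *ᵥ v)).re + 2 * (star v ⬝ᵥ (G *ᵥ u)).re := by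
  have hcross : (star u ⬝ᵥ (G *ᵥ v)).re = (star v ⬝ᵥ (G *ᵥ u)).re := by
    rw [re_star_dotProduct_comm v, star_mulVec, hG.eq, ← dotProduct_mulVec]
  simp only [star_add, mulVec_add, add_dotProduct, dotProduct_add, Complex.add_re, hcross]
  ring

theorem Matrix.PosSemidef.one_add_smul_mulVec_inv {n : ℕ} {G : Matrix (Fin n) (Fin n) ℂ}
    (hG : G.PosSemidef) {ε : ℝ} (hε : 0 ≤ ε) (b : Fin n → ℂ) :
    (1 + (ε : ℂ) • G) *ᵥ ((1 + (ε : ℂ) • G)⁻¹ *ᵥ b) = b := by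
  have hpos : (1 + (ε : ℂ) • G).PosDef :=
    PosDef.one.add_posSemidef (hG.smul (Complex.zero_le_real.mpr hε))
  rw [mulVec_mulVec, mul_nonsing_inv _ ((isUnit_iff_isUnit_det _).mp hpos.isUnit), one_mulVec]

/-- KKT sufficiency for the convex QCQP with one constraint (Theorem 2 of the
paper): if `ε ≥ 0`, `u* = (I + εG)⁻¹(d + εg)` is feasible and complementary
slackness holds, then `u*` is a global minimizer of `‖u − d‖²` subject to
`q(u) ≤ γ̃`, where `q(u) = uᴴ G u − 2 Re(gᴴ u)`. -/
theorem qcqp1_kkt_sufficiency {n : ℕ}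
    (G : Matrix (Fin n) (Fin n) ℂ) (hG : G.PosSemidef)
    (d g : Fin n → ℂ) (γt : ℝ)
    (q : (Fin n → ℂ) → ℝ)
    (hq : ∀ u, q u = (star u ⬝ᵥ (G *ᵥ u)).re - 2 * (star g ⬝ᵥ u).re)
    (ε : ℝ) (hε : 0 ≤ ε)
    (ustar : Fin n → ℂ)
    (hustar : ustar = (1 + (ε : ℂ) • G)⁻¹ *ᵥ (d + (ε : ℂ) • g))
    (hfeas : q ustar ≤ γt)
    (hcs : ε * (q ustar - γt) = 0) :
    ∀ u : Fin n → ℂ, q u ≤ γt → vnormSq (ustar - d) ≤ vnormSq (u - d) := by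
  intro u hu
  obtain ⟨h, rfl⟩ : ∃ h, u = ustar + h := ⟨u - ustar, by simp⟩
  have hstat : ustar - d = (ε : ℂ) • (g - G *ᵥ ustar) := by
    have hlin := hG.one_add_smul_mulVec_inv hε (d + (ε : ℂ) • g)
    rw [← hustar, add_mulVec, one_mulVec, smul_mulVec] at hlin
    rw [smul_sub, sub_eq_sub_iff_add_eq_add, hlin, add_comm]
  have hobj : vnormSq (ustar + h - d) = vnormSq (ustar - d) + vnormSq h +
      2 * (ε * ((star h ⬝ᵥ g).re - (star h ⬝ᵥ (G *ᵥ ustar)).re)) := by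
    rw [add_sub_right_comm, vnormSq_add]
    congr 2
    rw [hstat, dotProduct_smul, dotProduct_sub, smul_eq_mul, Complex.re_ofReal_mul,
      Complex.sub_re]
  have hconstr : q (ustar + h) = q ustar + (star h ⬝ᵥ (G *ᵥ h)).re -
      2 * ((star h ⬝ᵥ g).re - (star h ⬝ᵥ (G *ᵥ ustar)).re) := by
    rw [hq, hq, hG.isHermitian.re_quadForm_add, dotProduct_add, Complex.add_re,
      re_star_dotProduct_comm g h]
    ring
  have hquad : 0 ≤ ε * (star h ⬝ᵥ (G *ᵥ h)).re :=
    mul_nonneg hε (hG.re_dotProduct_nonneg h)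
  have hnorm : 0 ≤ vnormSq h := Finset.sum_nonneg fun i _ => sq_nonneg _
  have hle : ε * (q (ustar + h) - γt) ≤ 0 :=
    mul_nonpos_of_nonneg_of_nonpos hε (sub_nonpos.mpr hu)
  rw [hconstr] at hle
  linarith
end

section
/- Let W ∈ ℂ^{m×n} be a matrix with W_{ij} ≠ 0 for all i, j, and define F* ∈ ℂ^{m×n} by [F*]_{ij} = −W_{ij}/|W_{ij}|. Then |[F*]_{ij}| = 1 for all i, j; Re Tr((F*)ᴴ W) = −Σ_{i,j} |W_{ij}|; and for every F ∈ ℂ^{m×n} with |F_{ij}| = 1 for all i, j one has Re Tr((F*)ᴴ W) ≤ Re Tr(Fᴴ W). -/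
open Matrix

theorem re_trace_conjTranspose_mul {m n : Type*} [Fintype m] [Fintype n] (F W : Matrix m n ℂ) :
    ((F.conjTranspose * W).trace).re = ∑ i, ∑ j, (star (F i j) * W i j).re := by
  simp only [Matrix.trace, Matrix.diag_apply, Matrix.mul_apply, Matrix.conjTranspose_apply,
    Complex.re_sum]
  exact Finset.sum_comm

theorem re_star_neg_div_norm_mul_self {w : ℂ} (hw : w ≠ 0) :
    (star (-w / (‖w‖ : ℂ)) * w).re = -‖w‖ := by
  have hn : (‖w‖ : ℂ) ≠ 0 := by simpa using hw
  have h : star (-w / (‖w‖ : ℂ)) * w = ((-‖w‖ : ℝ) : ℂ) := by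
    simp only [Complex.star_def, map_div₀, map_neg, Complex.conj_ofReal]
    rw [div_mul_eq_mul_div, neg_mul, Complex.conj_mul', div_eq_iff hn]
    push_cast
    ring
  rw [h, Complex.ofReal_re]

theorem neg_norm_le_re_star_mul {f : ℂ} (hf : ‖f‖ = 1) (w : ℂ) :
    -‖w‖ ≤ (star f * w).re := by
  have h := (abs_le.mp (Complex.abs_re_le_norm (star f * w))).1
  rwa [norm_mul, norm_star, hf, one_mul] at h

/-- Theorem 3 of the paper (core step): the constant-modulus matrix
`F* = −exp(j∠W)`, i.e. `[F*]_{ij} = −W_{ij}/|W_{ij}|`, minimizes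
`Re Tr(Fᴴ W)` over all matrices with unit-modulus entries, attaining the
value `−Σ_{i,j} |W_{ij}|`. -/
theorem constant_modulus_linear_min {m n : ℕ}
    (W : Matrix (Fin m) (Fin n) ℂ) (hW : ∀ i j, W i j ≠ 0)
    (Fstar : Matrix (Fin m) (Fin n) ℂ)
    (hF : ∀ i j, Fstar i j = -(W i j) / (‖W i j‖ : ℂ)) :
    (∀ i j, ‖Fstar i j‖ = 1) ∧
    ((Fstar.conjTranspose * W).trace).re = -∑ i, ∑ j, ‖W i j‖ ∧
    ∀ F : Matrix (Fin m) (Fin n) ℂ, (∀ i j, ‖F i j‖ = 1) →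
      ((Fstar.conjTranspose * W).trace).re ≤ ((F.conjTranspose * W).trace).re := by
  have hval : ((Fstar.conjTranspose * W).trace).re = -∑ i, ∑ j, ‖W i j‖ := by
    simp only [re_trace_conjTranspose_mul, hF, re_star_neg_div_norm_mul_self (hW _ _),
      Finset.sum_neg_distrib]
  refine ⟨fun i j => ?_, hval, fun F hFn => ?_⟩
  · simp [hF, hW i j]
  · rw [hval, re_trace_conjTranspose_mul]
    simp only [← Finset.sum_neg_distrib]
    exact Finset.sum_le_sum fun i _ => Finset.sum_le_sum fun j _ =>
      neg_norm_le_re_star_mul (hFn i j) (W i j)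
end

section
/- Let E be a real inner product space, f : E → ℝ differentiable with gradient ∇f Lipschitz continuous with constant α ≥ 0, g : E → ℝ an arbitrary function, X ⊆ E a subset, and T₀ ∈ X. Define the surrogate S(T) = f(T₀) + ⟪∇f(T₀), T − T₀⟫ + (α/2)‖T − T₀‖² + g(T). If T₁ ∈ X satisfies S(T₁) ≤ S(T) for all T ∈ X, then f(T₁) + g(T₁) ≤ f(T₀) + g(T₀). -/
open RealInnerProductSpace

/-- Descent lemma: a function whose gradient is `α`-Lipschitz lies below its quadratic upper
model at every base point. -/
theorem le_quadratic_model_of_lipschitz_gradient {E : Type*} [NormedAddCommGroup E]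
    [InnerProductSpace ℝ E] {f : E → ℝ} {f' : E → E} {α : ℝ}
    (hderiv : ∀ x : E, HasFDerivAt f (innerSL ℝ (f' x)) x)
    (hlip : ∀ x y : E, ‖f' x - f' y‖ ≤ α * ‖x - y‖) (x y : E) :
    f y ≤ f x + ⟪f' x, y - x⟫ + α / 2 * ‖y - x‖ ^ 2 := by
  set v := y - x with hv
  have hline (t : ℝ) : HasDerivAt (fun s : ℝ => f (x + s • v)) ⟪f' (x + t • v), v⟫ t := by
    have hpath : HasDerivAt (fun s : ℝ => x + s • v) v t := by
      simpa using ((hasDerivAt_id t).smul_const v).const_add x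
    exact (hderiv (x + t • v)).comp_hasDerivAt t hpath
  have hmodel (t : ℝ) : HasDerivAt
      (fun s : ℝ => f x + s * ⟪f' x, v⟫ + α / 2 * ‖v‖ ^ 2 * s ^ 2)
      (⟪f' x, v⟫ + α * ‖v‖ ^ 2 * t) t := by
    have h := (((hasDerivAt_id t).mul_const ⟪f' x, v⟫).const_add (f x)).add
      (((hasDerivAt_id t).pow 2).const_mul (α / 2 * ‖v‖ ^ 2))
    refine h.congr_deriv ?_
    simp
    ring
  have hslope (t : ℝ) (ht : 0 ≤ t) :
      ⟪f' (x + t • v), v⟫ ≤ ⟪f' x, v⟫ + α * ‖v‖ ^ 2 * t := by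
    have hcs : ⟪f' (x + t • v) - f' x, v⟫ ≤ ‖f' (x + t • v) - f' x‖ * ‖v‖ :=
      real_inner_le_norm _ _
    have hl : ‖f' (x + t • v) - f' x‖ ≤ α * (t * ‖v‖) := by
      simpa [norm_smul, abs_of_nonneg ht] using hlip (x + t • v) x
    have hm := mul_le_mul_of_nonneg_right hl (norm_nonneg v)
    rw [inner_sub_left] at hcs
    linarith
  have h := image_le_of_deriv_right_le_deriv_boundary (a := 0) (b := 1)
    (fun t _ => (hline t).continuousAt.continuousWithinAt)
    (fun t _ => (hline t).hasDerivWithinAt) (by simp)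
    (fun t _ => (hmodel t).continuousAt.continuousWithinAt)
    (fun t _ => (hmodel t).hasDerivWithinAt) (fun t ht => hslope t ht.1)
    (Set.right_mem_Icc.mpr zero_le_one)
  simpa [hv] using h

/-- Proximal-gradient descent step of the PANDA framework (Lemma 2, first
property): minimizing the locally tight upper bound
`S(T) = f(T₀) + ⟪∇f(T₀), T − T₀⟫ + (α/2)‖T − T₀‖² + g(T)` over the feasible
set `X ∋ T₀` does not increase `f + g`. -/
theorem prox_grad_descent {E : Type*} [NormedAddCommGroup E] [InnerProductSpace ℝ E]
    (f : E → ℝ) (f' : E → E) (α : ℝ) (hα : 0 ≤ α)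
    (hderiv : ∀ x : E, HasFDerivAt f (innerSL ℝ (f' x)) x)
    (hlip : ∀ x y : E, ‖f' x - f' y‖ ≤ α * ‖x - y‖)
    (g : E → ℝ) (X : Set E) (T₀ : E) (hT₀ : T₀ ∈ X)
    (S : E → ℝ)
    (hS : ∀ T, S T = f T₀ + ⟪f' T₀, T - T₀⟫ + α / 2 * ‖T - T₀‖ ^ 2 + g T)
    (T₁ : E) (hT₁ : T₁ ∈ X) (hmin : ∀ T ∈ X, S T₁ ≤ S T) :
    f T₁ + g T₁ ≤ f T₀ + g T₀ := by
  have hdescent := le_quadratic_model_of_lipschitz_gradient hderiv hlip T₀ T₁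
  have h := hmin T₀ hT₀
  simp only [hS, sub_self, inner_zero_right, norm_zero] at h
  linarith
end

section
/- For all real numbers γ ≥ 0 and r > −1, one has log(1 + r) − r + (1 + r)·γ/(1 + γ) ≤ log(1 + γ), with equality if and only if r = γ. -/
/-- Lagrangian dual transform identity (Proposition 2 of the paper): for
`γ ≥ 0` and `r > −1`, `log(1+r) − r + (1+r)γ/(1+γ) ≤ log(1+γ)`, with equality
iff `r = γ`. -/
theorem lagrangian_dual_transform (γ r : ℝ) (hγ : 0 ≤ γ) (hr : -1 < r) :
    Real.log (1 + r) - r + (1 + r) * γ / (1 + γ) ≤ Real.log (1 + γ) ∧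
    (Real.log (1 + r) - r + (1 + r) * γ / (1 + γ) = Real.log (1 + γ) ↔ r = γ) := by
  have hr_pos : 0 < 1 + r := by linarith
  have hγ_pos : 0 < 1 + γ := by linarith
  have hx : 0 < (1 + r) / (1 + γ) := div_pos hr_pos hγ_pos
  have hlog : Real.log ((1 + r) / (1 + γ)) = Real.log (1 + r) - Real.log (1 + γ) :=
    Real.log_div hr_pos.ne' hγ_pos.ne'
  have hfrac : (1 + r) * γ / (1 + γ) = 1 + r - (1 + r) / (1 + γ) := by
    field_simp
    ring
  rw [hfrac]
  refine ⟨by linarith [Real.log_le_sub_one_of_pos hx], fun h => ?_, ?_⟩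
  · by_contra hne
    have hx1 : (1 + r) / (1 + γ) ≠ 1 := fun h1 =>
      hne (add_left_cancel ((div_eq_one_iff_eq hγ_pos.ne').mp h1))
    linarith [Real.log_lt_sub_one_of_pos hx hx1]
  · rintro rfl
    rw [div_self hr_pos.ne']
    ring
end

section
/- Let w, D be real numbers with w > 0 and D > 0, and s ∈ ℂ. Then for all real r ≥ 0 and all η ∈ ℂ: w·log(1 + r) − w·r + 2·√(w·(1 + r))·Re(conj(η)·s) − |η|²·(|s|² + D) ≤ w·log(1 + |s|²/D). Moreover, equality holds for r = |s|²/D and η = √(w·(1 + r))·s/(|s|² + D). -/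
/-- Quadratic transform: a concave quadratic in `η` is bounded by its maximum value. -/
theorem quadratic_transform_le {a T : ℝ} (hT : 0 < T) (s η : ℂ) :
    2 * a * ((starRingEnd ℂ) η * s).re - ‖η‖ ^ 2 * T ≤ a ^ 2 * (‖s‖ ^ 2 / T) := by
  rw [← mul_div_assoc, le_div_iff₀ hT, Complex.sq_norm, Complex.sq_norm, Complex.normSq_apply,
    Complex.normSq_apply, Complex.mul_re, Complex.conj_re, Complex.conj_im]
  nlinarith [sq_nonneg (a * s.re - T * η.re), sq_nonneg (a * s.im - T * η.im)]

/-- The quadratic transform is tight at `η = (a / T) s`. -/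
theorem quadratic_transform_eq {a T : ℝ} (hT : 0 < T) (s : ℂ) :
    2 * a * ((starRingEnd ℂ) (((a / T : ℝ) : ℂ) * s) * s).re - ‖((a / T : ℝ) : ℂ) * s‖ ^ 2 * T
      = a ^ 2 * (‖s‖ ^ 2 / T) := by
  rw [norm_mul, mul_pow, Complex.norm_real, Real.norm_eq_abs, sq_abs, map_mul, Complex.conj_ofReal,
    mul_assoc (a := ((a / T : ℝ) : ℂ)), Complex.re_ofReal_mul, ← Complex.normSq_eq_conj_mul_self,
    Complex.ofReal_re, ← Complex.sq_norm]
  field_simp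
  ring

/-- Lagrangian dual transform of `log (1 + N / D)`. -/
theorem lagrangian_dual_transform_le {N D r : ℝ} (hN : 0 ≤ N) (hD : 0 < D) (hr : 0 ≤ r) :
    Real.log (1 + r) - r + (1 + r) * (N / (N + D)) ≤ Real.log (1 + N / D) := by
  have hg : 0 < 1 + N / D := by positivity
  have hr' : 0 < 1 + r := by positivity
  have hlog := Real.log_le_sub_one_of_pos (div_pos hr' hg)
  rw [Real.log_div hr'.ne' hg.ne'] at hlog
  have hratio : (1 + r) / (1 + N / D) - 1 = r - (1 + r) * (N / (N + D)) := by
    have : N + D ≠ 0 := by positivity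
    have : D + N ≠ 0 := by positivity
    field_simp
    ring
  linarith

/-- The Lagrangian dual transform is tight at `r = N / D`. -/
theorem lagrangian_dual_transform_eq {N D : ℝ} (hN : 0 ≤ N) (hD : 0 < D) :
    Real.log (1 + N / D) - N / D + (1 + N / D) * (N / (N + D)) = Real.log (1 + N / D) := by
  have : N + D ≠ 0 := by positivity
  have : (1 + N / D) * (N / (N + D)) = N / D := by
    field_simp
    ring
  linarith

/-- Per-user form of Proposition 2 of the paper: fractional-programming
reformulation of the weighted rate `w log(1 + |s|²/D)` via the Lagrangian dual
transform (auxiliary `r`) and the quadratic transform (auxiliary `η`). The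
surrogate is upper bounded by the weighted rate, with equality at
`r = |s|²/D` and `η = √(w(1+r)) s/(|s|² + D)`. -/
theorem weighted_rate_fp_reformulation (w D : ℝ) (hw : 0 < w) (hD : 0 < D) (s : ℂ) :
    (∀ r : ℝ, 0 ≤ r → ∀ η : ℂ,
      w * Real.log (1 + r) - w * r
        + 2 * Real.sqrt (w * (1 + r)) * ((starRingEnd ℂ) η * s).re
        - ‖η‖ ^ 2 * (‖s‖ ^ 2 + D)
      ≤ w * Real.log (1 + ‖s‖ ^ 2 / D)) ∧
    (∀ r : ℝ, r = ‖s‖ ^ 2 / D →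
      ∀ η : ℂ, η = ((Real.sqrt (w * (1 + r)) / (‖s‖ ^ 2 + D) : ℝ) : ℂ) * s →
        w * Real.log (1 + r) - w * r
          + 2 * Real.sqrt (w * (1 + r)) * ((starRingEnd ℂ) η * s).re
          - ‖η‖ ^ 2 * (‖s‖ ^ 2 + D)
        = w * Real.log (1 + ‖s‖ ^ 2 / D)) := by
  have hT : 0 < ‖s‖ ^ 2 + D := by positivity
  constructor
  · intro r hr η
    have hq := quadratic_transform_le (a := √(w * (1 + r))) hT s η
    rw [Real.sq_sqrt (by positivity)] at hq
    have hl := mul_le_mul_of_nonneg_left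
      (lagrangian_dual_transform_le (sq_nonneg ‖s‖) hD hr) hw.le
    linarith
  · rintro r rfl η rfl
    have hq := quadratic_transform_eq (a := √(w * (1 + ‖s‖ ^ 2 / D))) hT s
    rw [Real.sq_sqrt (by positivity)] at hq
    have hl := congrArg (w * ·) (lagrangian_dual_transform_eq (sq_nonneg ‖s‖) hD)
    linarith
end
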